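/- arXiv:1907.03088 — 2 statements merged into one kernel-verified Lean document; each statement's English description precedes it below -/
import Mathlib

section
/- Let α > 0 and ρ ∈ ℝ. Then for every t > 0, the function t ↦ E_{α,1}(ρ t^α) is differentiable at t and its derivative equals ρ t^{α-1} E_{α,α}(ρ t^α). -/
/-!
The Mittag-Leffler series is an entire power series in `x`, so it may be differentiated termwise.
Convergence rests on the bound `e^{-M} M^{s-1} ≤ Γ(s)` for all `M > 0` and `s ≥ 1`
(`exp_neg_mul_rpow_le_Gamma`): with `M^α = 2(r+1)` it dominates the terms `r^j / Γ(αj+β)` by a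
geometric series of ratio `1/2` (`summable_mlf_of_nonneg`). By `Γ(z+1) = z Γ(z)`, the derivative of
`x^{j+1} / Γ(α(j+1)+1)` is `α⁻¹ x^j / Γ(αj+α)`, whence `E_{α,1}' = α⁻¹ E_{α,α}`
(`hasDerivAt_mlf_one`), and the chain rule with `x = ρ t^α` gives the claim.
-/

/-- The (real) Mittag-Leffler function `E_{α,β}(x) = ∑_{j=0}^∞ x^j / Γ(αj + β)`. -/
noncomputable def mlf (α β x : ℝ) : ℝ := ∑' j : ℕ, x ^ j / Real.Gamma (α * j + β)

/-- Obtained by discarding `(0, M]` from the Gamma integral and bounding `x^{s-1}` below by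
`M^{s-1}` on the rest. -/
lemma exp_neg_mul_rpow_le_Gamma {M s : ℝ} (hM : 0 < M) (hs : 1 ≤ s) :
    Real.exp (-M) * M ^ (s - 1) ≤ Real.Gamma s := by
  have hint := Real.GammaIntegral_convergent (show 0 < s by linarith)
  rw [Real.Gamma_eq_integral (by linarith)]
  have hsub : Set.Ioi M ⊆ Set.Ioi (0 : ℝ) := Set.Ioi_subset_Ioi hM.le
  calc Real.exp (-M) * M ^ (s - 1)
      = ∫ x in Set.Ioi M, Real.exp (-x) * M ^ (s - 1) := by
        rw [MeasureTheory.integral_mul_const, integral_exp_neg_Ioi]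
    _ ≤ ∫ x in Set.Ioi M, Real.exp (-x) * x ^ (s - 1) := by
        refine MeasureTheory.setIntegral_mono_on ?_ (hint.mono_set hsub) measurableSet_Ioi ?_
        · exact (integrableOn_exp_neg_Ioi M).mul_const _
        · intro x hx
          have hx' : M < x := hx
          gcongr
    _ ≤ ∫ x in Set.Ioi (0 : ℝ), Real.exp (-x) * x ^ (s - 1) := by
        refine MeasureTheory.setIntegral_mono_set hint ?_ hsub.eventuallyLE
        filter_upwards [MeasureTheory.ae_restrict_mem measurableSet_Ioi] with x hx
        have hx' : 0 < x := hx
        simp only [Pi.zero_apply]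
        positivity

lemma summable_mlf_of_nonneg {α β r : ℝ} (hα : 0 < α) (hr : 0 ≤ r) :
    Summable fun j : ℕ => r ^ j / Real.Gamma (α * j + β) := by
  obtain ⟨M, hM, hMα⟩ : ∃ M : ℝ, 0 < M ∧ M ^ α = 2 * (r + 1) :=
    ⟨(2 * (r + 1)) ^ α⁻¹, by positivity, Real.rpow_inv_rpow (by positivity) hα.ne'⟩
  set C := Real.exp (-M) * M ^ (β - 1) with hC
  have hCpos : 0 < C := by positivity
  refine Summable.of_norm_bounded_eventually_nat (g := fun j : ℕ => C⁻¹ * (1 / 2 : ℝ) ^ j)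
    (summable_geometric_two.mul_left _) ?_
  have hlim : Filter.Tendsto (fun j : ℕ => α * (j : ℝ) + β) Filter.atTop Filter.atTop :=
    Filter.tendsto_atTop_add_const_right _ _ (tendsto_natCast_atTop_atTop.const_mul_atTop hα)
  filter_upwards [hlim.eventually_ge_atTop 1] with j hj
  have hΓ : C * (2 * (r + 1)) ^ j ≤ Real.Gamma (α * j + β) := by
    refine le_of_eq_of_le ?_ (exp_neg_mul_rpow_le_Gamma hM hj)
    rw [hC, ← hMα, ← Real.rpow_mul_natCast hM.le, mul_assoc, ← Real.rpow_add hM]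
    ring_nf
  have hΓpos : 0 < Real.Gamma (α * j + β) := Real.Gamma_pos_of_pos (by linarith)
  rw [Real.norm_of_nonneg (by positivity), div_le_iff₀ hΓpos]
  calc r ^ j ≤ (r + 1) ^ j := by gcongr; linarith
    _ = C⁻¹ * (1 / 2) ^ j * (C * (2 * (r + 1)) ^ j) := by
        rw [mul_pow, div_pow, one_pow]
        field_simp
    _ ≤ _ := by gcongr

lemma summable_mlf {α β : ℝ} (hα : 0 < α) (x : ℝ) :
    Summable fun j : ℕ => x ^ j / Real.Gamma (α * j + β) := by
  refine Summable.of_norm ?_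
  refine (summable_mlf_of_nonneg (β := β) hα (abs_nonneg x)).norm.congr fun j => ?_
  simp

lemma hasDerivAt_mlf_one {α : ℝ} (hα : 0 < α) (x : ℝ) :
    HasDerivAt (mlf α 1) (α⁻¹ * mlf α α x) x := by
  -- The constant term is split off, so that no `x ^ (j - 1)` appears after differentiation.
  have hsplit : mlf α 1 = fun y =>
      1 + ∑' j : ℕ, y ^ (j + 1) / Real.Gamma (α * ((j + 1 : ℕ) : ℝ) + 1) := by
    funext y
    rw [mlf, (summable_mlf hα y).tsum_eq_zero_add]
    simp
  rw [hsplit, mlf, ← tsum_mul_left]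
  refine HasDerivAt.const_add _ ?_
  have hu : Summable fun j : ℕ => α⁻¹ * ((|x| + 1) ^ j / Real.Gamma (α * j + α)) :=
    (summable_mlf_of_nonneg hα (by positivity)).mul_left _
  refine hasDerivAt_tsum_of_isPreconnected (t := Metric.ball (0 : ℝ) (|x| + 1)) (y₀ := x)
    (g := fun (j : ℕ) (y : ℝ) => y ^ (j + 1) / Real.Gamma (α * ((j + 1 : ℕ) : ℝ) + 1))
    (g' := fun (j : ℕ) (y : ℝ) => α⁻¹ * (y ^ j / Real.Gamma (α * j + α)))
    hu Metric.isOpen_ball (convex_ball _ _).isPreconnected ?_ ?_ ?_ ?_ ?_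
  · intro j y _
    have hpos : 0 < α * (j : ℝ) + α := by positivity
    have hΓ := (Real.Gamma_pos_of_pos hpos).ne'
    have hrec : Real.Gamma (α * ((j + 1 : ℕ) : ℝ) + 1) =
        (α * j + α) * Real.Gamma (α * j + α) := by
      rw [← Real.Gamma_add_one hpos.ne']
      push_cast
      ring_nf
    have hd := (hasDerivAt_pow (j + 1) y).div_const (Real.Gamma (α * ((j + 1 : ℕ) : ℝ) + 1))
    refine hd.congr_deriv ?_
    rw [hrec]
    have hj : (j : ℝ) + 1 ≠ 0 := by positivity
    have hfac : α * (j : ℝ) + α = α * (j + 1) := by ring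
    generalize Real.Gamma (α * j + α) = G at hΓ ⊢
    rw [hfac]
    push_cast
    field_simp
  · intro j y hy
    have hy' : |y| < |x| + 1 := by simpa using hy
    have hΓ : 0 < Real.Gamma (α * j + α) := Real.Gamma_pos_of_pos (by positivity)
    rw [norm_mul, norm_div, norm_pow, Real.norm_of_nonneg hΓ.le,
      Real.norm_of_nonneg (inv_pos.2 hα).le, Real.norm_eq_abs]
    gcongr
  · simp
  · exact (summable_nat_add_iff 1).2 (summable_mlf (β := 1) hα x)
  · simp

/-- For `α > 0`, `ρ ∈ ℝ` and `t > 0`, the function `t ↦ E_{α,1}(ρ t^α)`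
is differentiable at `t` with derivative `ρ t^{α-1} E_{α,α}(ρ t^α)`. -/
theorem mittagLeffler_hasDerivAt {α ρ : ℝ} (hα : 0 < α) {t : ℝ} (ht : 0 < t) :
    HasDerivAt (fun s : ℝ => mlf α 1 (ρ * s ^ α))
      (ρ * t ^ (α - 1) * mlf α α (ρ * t ^ α)) t := by
  have hinner : HasDerivAt (fun s : ℝ => ρ * s ^ α) (ρ * (α * t ^ (α - 1))) t :=
    (Real.hasDerivAt_rpow_const (Or.inl ht.ne')).const_mul ρ
  have h := (hasDerivAt_mlf_one hα (ρ * t ^ α)).comp t hinner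
  refine h.congr_deriv ?_
  field_simp
end

section
/- Let 0 < α < 1, ρ ∈ ℝ, T > 0, and let f : [0,T] → ℝ be continuously differentiable. Define Φ(t) = ∫_0^t (t−θ)^{α−1} E_{α,α}(ρ (t−θ)^α) f(θ) dθ for t ∈ [0,T]. Then for every t ∈ (0,T], ({}_0D_t^α Φ)(t) = ρ Φ(t) + f(t). -/
open MeasureTheory Set

/-! ### The Mittag-Leffler series -/

/-- Restrict the Gamma integral to `(M, ∞)`. As `M` is arbitrary, this shows that `Γ` outgrows every
geometric sequence. -/
lemma rpow_mul_exp_le_Gamma {M s : ℝ} (hM : 0 < M) (hs : 0 < s) :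
    M ^ s * Real.exp (-M) ≤ Real.Gamma (s + 1) := by
  rw [Real.Gamma_eq_integral (by linarith), ← integral_exp_neg_Ioi M, ← integral_const_mul]
  have hint := Real.GammaIntegral_convergent (s := s + 1) (by linarith)
  have hsub : Ioi M ⊆ Ioi 0 := Ioi_subset_Ioi hM.le
  refine le_trans (setIntegral_mono_on ((integrableOn_exp_neg_Ioi M).const_mul _)
    (hint.mono_set hsub) measurableSet_Ioi fun x hx => ?_) (setIntegral_mono_set hint ?_ (Filter.Eventually.of_forall hsub))
  · rw [mul_comm]
    have : (M:ℝ) ^ s ≤ x ^ s := Real.rpow_le_rpow hM.le (le_of_lt hx) hs.le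
    simp only [add_sub_cancel_right]
    gcongr
  · refine (ae_restrict_mem measurableSet_Ioi).mono fun x hx => ?_
    have : (0:ℝ) < x := hx
    simp only [Pi.zero_apply]
    positivity

lemma summable_pow_div_Gamma {α β : ℝ} (hα : 0 < α) (hβ : 0 < β) (y : ℝ) :
    Summable fun j : ℕ => |y| ^ j / Real.Gamma (α * j + β) := by
  -- This choice gives `|y| / M ^ α < 1`, so the terms are dominated by `(α j + β) r ^ j` with `r < 1`.
  set M : ℝ := (2 * (|y| + 1)) ^ (1 / α) with hMdef
  have hM : 0 < M := by positivity
  have hMα : M ^ α = 2 * (|y| + 1) := by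
    rw [hMdef, ← Real.rpow_mul (by positivity), one_div, inv_mul_cancel₀ hα.ne', Real.rpow_one]
  set r : ℝ := |y| / M ^ α with hr
  have hr0 : 0 ≤ r := by positivity
  have hr1 : ‖r‖ < 1 := by
    rw [Real.norm_of_nonneg hr0, hr, hMα, div_lt_one (by positivity)]
    linarith [abs_nonneg y]
  have h1 := summable_pow_mul_geometric_of_norm_lt_one 1 hr1
  have h0 := summable_geometric_of_norm_lt_one hr1
  have hsum := ((h1.mul_left α).add (h0.mul_left β)).mul_left (Real.exp M * M ^ (-β))
  refine Summable.of_nonneg_of_le (fun j => ?_) (fun j => ?_) hsum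
  · have : 0 < Real.Gamma (α * j + β) := Real.Gamma_pos_of_pos (by positivity)
    positivity
  · have hs : 0 < α * j + β := by positivity
    have hG := rpow_mul_exp_le_Gamma hM hs
    rw [Real.Gamma_add_one hs.ne'] at hG
    have hGp : 0 < Real.Gamma (α * j + β) := Real.Gamma_pos_of_pos hs
    rw [div_le_iff₀ hGp]
    have e1 : M ^ (α * j + β) = (M ^ α) ^ j * M ^ β := by
      rw [Real.rpow_add hM, Real.rpow_mul hM.le, Real.rpow_natCast]
    rw [e1] at hG
    have hA : 0 < M ^ α := by positivity
    have hB : 0 < M ^ β := by positivity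
    calc |y| ^ j = (Real.exp M * M ^ (-β) * r ^ j) * ((M ^ α) ^ j * M ^ β * Real.exp (-M)) := by
          rw [Real.exp_neg, Real.rpow_neg hM.le, hr, div_pow]
          field_simp
      _ ≤ (Real.exp M * M ^ (-β) * r ^ j) * ((α * j + β) * Real.Gamma (α * j + β)) := by
          gcongr
      _ = _ := by ring

lemma continuous_mlf {α β : ℝ} (hα : 0 < α) (hβ : 0 < β) : Continuous (mlf α β) := by
  rw [← continuousOn_univ]
  refine continuousOn_of_forall_continuousAt fun x _ => ?_
  have hc : ContinuousOn (mlf α β) (Metric.ball 0 (|x| + 1)) := by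
    refine continuousOn_tsum (u := fun j : ℕ => |(|x| + 1)| ^ j / Real.Gamma (α * j + β))
      (fun j => by fun_prop) (summable_pow_div_Gamma hα hβ _) fun j y hy => ?_
    have hG : 0 < Real.Gamma (α * j + β) := Real.Gamma_pos_of_pos (by positivity)
    rw [norm_div, norm_pow, Real.norm_of_nonneg hG.le]
    have : ‖y‖ ≤ |(|x| + 1)| := by
      rw [abs_of_nonneg (by positivity : 0 ≤ |x| + 1)]
      simpa using (mem_ball_zero_iff.1 hy).le
    gcongr
  exact hc.continuousAt (Metric.isOpen_ball.mem_nhds (by simp))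

lemma mlf_one {α : ℝ} (hα : 0 < α) (y : ℝ) : mlf α 1 y = 1 + y * mlf α (α + 1) y := by
  have hs : Summable fun j : ℕ => y ^ j / Real.Gamma (α * j + 1) := by
    refine Summable.of_norm_bounded (summable_pow_div_Gamma hα one_pos y) fun j => ?_
    rw [norm_div, norm_pow, Real.norm_of_nonneg (Real.Gamma_pos_of_pos (by positivity)).le,
      Real.norm_eq_abs]
  rw [mlf, hs.tsum_eq_zero_add, mlf, ← tsum_mul_left]
  simp only [pow_zero, Nat.cast_zero, mul_zero, zero_add, Real.Gamma_one, div_one]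
  congr 1
  refine tsum_congr fun j => ?_
  rw [pow_succ', mul_div_assoc]
  congr 3
  push_cast; ring

/-! ### Integrals of the kernel -/

/-- Euler's beta integral over `(0, x)`, for real exponents. -/
lemma integral_beta {a b x : ℝ} (ha : 0 < a) (hb : 0 < b) (hx : 0 < x) :
    ∫ s in (0:ℝ)..x, s ^ (a - 1) * (x - s) ^ (b - 1) =
      x ^ (a + b - 1) * (Real.Gamma a * Real.Gamma b / Real.Gamma (a + b)) := by
  have h := Complex.betaIntegral_scaled a b hx
  rw [Complex.betaIntegral_eq_Gamma_mul_div _ _ (by simpa) (by simpa)] at h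
  have h1 : ∫ s in (0:ℝ)..x, (s : ℂ) ^ ((a:ℂ) - 1) * ((x : ℂ) - s) ^ ((b:ℂ) - 1) =
      ((∫ s in (0:ℝ)..x, s ^ (a - 1) * (x - s) ^ (b - 1) : ℝ) : ℂ) := by
    rw [← intervalIntegral.integral_ofReal]
    refine intervalIntegral.integral_congr fun s hs => ?_
    rw [uIcc_of_le hx.le] at hs
    rw [Complex.ofReal_mul, Complex.ofReal_cpow hs.1, Complex.ofReal_cpow (sub_nonneg.2 hs.2)]
    push_cast; rfl
  rw [h1, ← Complex.ofReal_add, Complex.Gamma_ofReal, Complex.Gamma_ofReal,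
    Complex.Gamma_ofReal, ← Complex.ofReal_one, ← Complex.ofReal_sub,
    ← Complex.ofReal_cpow hx.le] at h
  exact_mod_cast h

lemma intervalIntegrable_beta {a b x : ℝ} (ha : 0 < a) (hb : 0 < b) (hx : 0 < x) :
    IntervalIntegrable (fun s : ℝ => s ^ (a - 1) * (x - s) ^ (b - 1)) volume 0 x := by
  -- A non-integrable function would have integral `0`, but the beta integral is positive.
  by_contra hn
  have h := integral_beta ha hb hx
  rw [intervalIntegral.integral_undef hn] at h
  have := Real.Gamma_pos_of_pos ha
  have := Real.Gamma_pos_of_pos hb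
  have := Real.Gamma_pos_of_pos (add_pos ha hb)
  have : 0 < x ^ (a + b - 1) * (Real.Gamma a * Real.Gamma b / Real.Gamma (a + b)) := by positivity
  exact this.ne h

/-- Up to the factor `Γ(b)`, the fractional integral of order `b` of the kernel
`s^(α-1) E_{α,α}(ρ s^α)`, computed termwise. -/
lemma integral_kernel {α b x : ℝ} (ρ : ℝ) (hα : 0 < α) (hb : 0 < b) (hx : 0 < x) :
    ∫ s in (0:ℝ)..x, s ^ (α - 1) * mlf α α (ρ * s ^ α) * (x - s) ^ (b - 1) =
      Real.Gamma b * x ^ (α + b - 1) * mlf α (α + b) (ρ * x ^ α) := by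
  have hp : ∀ j : ℕ, 0 < α * j + α := fun j => by positivity
  have hG : ∀ j : ℕ, 0 < Real.Gamma (α * j + α) := fun j => Real.Gamma_pos_of_pos (hp j)
  have hGb : 0 < Real.Gamma b := Real.Gamma_pos_of_pos hb
  set F : ℕ → ℝ → ℝ := fun j s =>
    ρ ^ j / Real.Gamma (α * j + α) * (s ^ (α * j + α - 1) * (x - s) ^ (b - 1)) with hF
  have hxp : ∀ j : ℕ, x ^ (α * j + α + b - 1) = x ^ (α + b - 1) * (x ^ α) ^ j := fun j => by
    rw [← Real.rpow_natCast, ← Real.rpow_mul hx.le, ← Real.rpow_add hx]; ring_nf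
  have hint : ∀ j, IntegrableOn (F j) (Ioc 0 x) := fun j =>
    (((intervalIntegrable_beta (hp j) hb hx).const_mul _).1)
  have hval : ∀ (j : ℕ) (c : ℝ), ∫ s in Ioc 0 x,
      c ^ j / Real.Gamma (α * j + α) * (s ^ (α * j + α - 1) * (x - s) ^ (b - 1)) =
      Real.Gamma b * x ^ (α + b - 1) *
        ((c * x ^ α) ^ j / Real.Gamma (α * j + (α + b))) := fun j c => by
    rw [integral_const_mul, ← intervalIntegral.integral_of_le hx.le, integral_beta (hp j) hb hx,
      hxp j, mul_pow, add_assoc]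
    have := (hG j).ne'
    field_simp
  have hnorm : ∀ j, ∫ s in Ioc 0 x, ‖F j s‖ = Real.Gamma b * x ^ (α + b - 1) *
        (|ρ * x ^ α| ^ j / Real.Gamma (α * j + (α + b))) := fun j => by
    rw [abs_mul, abs_of_pos (by positivity : 0 < x ^ α), ← hval]
    refine setIntegral_congr_fun measurableSet_Ioc fun s hs => ?_
    have h1 : 0 ≤ s ^ (α * j + α - 1) := Real.rpow_nonneg hs.1.le _
    have h2 : 0 ≤ (x - s) ^ (b - 1) := Real.rpow_nonneg (sub_nonneg.2 hs.2) _
    simp only [hF]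
    rw [norm_mul, norm_div, norm_pow, Real.norm_of_nonneg (hG j).le,
      Real.norm_of_nonneg (mul_nonneg h1 h2), Real.norm_eq_abs]
  have hsum : Summable fun j => ∫ s in Ioc 0 x, ‖F j s‖ := by
    simp_rw [hnorm]
    exact (summable_pow_div_Gamma hα (by positivity) _).mul_left _
  have key := (hasSum_integral_of_summable_integral_norm hint hsum).tsum_eq
  simp_rw [hF, hval] at key
  rw [mlf, ← tsum_mul_left, key, intervalIntegral.integral_of_le hx.le]
  refine setIntegral_congr_fun measurableSet_Ioc fun s hs => ?_
  rw [mlf, ← tsum_mul_left, ← tsum_mul_right]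
  refine tsum_congr fun j => ?_
  have : s ^ (α * j + α - 1) = s ^ (α - 1) * (s ^ α) ^ j := by
    rw [← Real.rpow_natCast, ← Real.rpow_mul hs.1.le, ← Real.rpow_add hs.1]; ring_nf
  rw [this, mul_pow]; ring

lemma intervalIntegrable_kernel {α b x : ℝ} (ρ : ℝ) (hα : 0 < α) (hb : 0 < b) (hx : 0 < x) :
    IntervalIntegrable (fun s => s ^ (α - 1) * mlf α α (ρ * s ^ α) * (x - s) ^ (b - 1))
      volume 0 x := by
  have hc : Continuous fun s : ℝ => mlf α α (ρ * s ^ α) :=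
    (continuous_mlf hα hα).comp (continuous_const.mul (Real.continuous_rpow_const hα.le))
  refine ((intervalIntegrable_beta hα hb hx).mul_continuousOn hc.continuousOn).congr ?_
  exact fun s _ => by ring

/-! ### One-sided convolution -/

/-- One-sided convolution `(u * v)(x) = ∫_0^x u(s) v(x - s) ds`. It is used only for `x ≥ 0`. -/
noncomputable def conv (u v : ℝ → ℝ) (x : ℝ) : ℝ := ∫ s in (0:ℝ)..x, u s * v (x - s)

lemma conv_comm (u v : ℝ → ℝ) (x : ℝ) : conv u v x = conv v u x := by
  have := intervalIntegral.integral_comp_sub_left (a := 0) (b := x) (fun s => v s * u (x - s)) x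
  simp only [sub_sub_cancel, sub_self, sub_zero] at this
  rw [conv, conv, ← this]
  simp_rw [mul_comm]

lemma conv_congr {u u' v v' : ℝ → ℝ} {x : ℝ} (hx : 0 ≤ x) (hu : EqOn u u' (Ioo 0 x))
    (hv : EqOn v v' (Ioo 0 x)) : conv u v x = conv u' v' x := by
  rw [conv, conv, intervalIntegral.integral_of_le hx, intervalIntegral.integral_of_le hx,
    integral_Ioc_eq_integral_Ioo, integral_Ioc_eq_integral_Ioo]
  refine setIntegral_congr_fun measurableSet_Ioo fun s hs => ?_
  rw [hu hs, hv ⟨sub_pos.2 hs.2, by linarith [hs.1]⟩]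

open scoped Convolution

lemma convolution_eq_conv {u v : ℝ → ℝ} (hu : ∀ s ≤ 0, u s = 0) (hv : ∀ s ≤ 0, v s = 0) {x : ℝ}
    (hx : 0 ≤ x) : (u ⋆[ContinuousLinearMap.mul ℝ ℝ] v) x = conv u v x := by
  rw [convolution_def, conv, intervalIntegral.integral_of_le hx]
  simp only [ContinuousLinearMap.mul_apply']
  rw [setIntegral_eq_integral_of_forall_compl_eq_zero]
  intro s hs
  rcases le_or_gt s 0 with h | h
  · rw [hu s h, zero_mul]
  · rw [hv, mul_zero]
    by_contra hc
    exact hs ⟨h, by linarith⟩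

lemma convolution_eq_zero {u v : ℝ → ℝ} (hu : ∀ s ≤ 0, u s = 0) (hv : ∀ s ≤ 0, v s = 0) {x : ℝ}
    (hx : x ≤ 0) : (u ⋆[ContinuousLinearMap.mul ℝ ℝ] v) x = 0 := by
  rw [convolution_def]
  refine integral_eq_zero_of_ae (Filter.Eventually.of_forall fun s => ?_)
  rcases le_or_gt s 0 with h | h
  · simp [hu s h]
  · simp [hv (x - s) (by linarith)]

lemma indicator_Ioc_of_nonpos (T : ℝ) (u : ℝ → ℝ) : ∀ s ≤ 0, (Ioc 0 T).indicator u s = 0 :=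
  fun _ hs => indicator_of_notMem (fun h => (not_lt.2 hs h.1)) _

lemma indicator_Ioc_of_mem_Ioo {T x s : ℝ} (u : ℝ → ℝ) (hs : s ∈ Ioo 0 x) (hxT : x ≤ T) :
    (Ioc 0 T).indicator u s = u s :=
  indicator_of_mem (show s ∈ Ioc 0 T from ⟨hs.1, hs.2.le.trans hxT⟩) _

/-- On `[0, T]`, the one-sided convolution is the convolution over `ℝ` of the functions cut off to
`(0, T]`. -/
lemma convolution_indicator_eq_conv {T : ℝ} (u v : ℝ → ℝ) {x : ℝ} (hx0 : 0 ≤ x) (hxT : x ≤ T) :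
    ((Ioc 0 T).indicator u ⋆[ContinuousLinearMap.mul ℝ ℝ] (Ioc 0 T).indicator v) x =
      conv u v x := by
  rw [convolution_eq_conv (indicator_Ioc_of_nonpos T u) (indicator_Ioc_of_nonpos T v) hx0]
  exact conv_congr hx0 (fun s hs => indicator_Ioc_of_mem_Ioo _ hs hxT)
    (fun s hs => indicator_Ioc_of_mem_Ioo _ hs hxT)

lemma integrableOn_conv {T : ℝ} {u v : ℝ → ℝ} (hu : IntegrableOn u (Ioc 0 T))
    (hv : IntegrableOn v (Ioc 0 T)) : IntegrableOn (conv u v) (Ioc 0 T) :=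
  ((hu.integrable_indicator measurableSet_Ioc).integrable_convolution
    (ContinuousLinearMap.mul ℝ ℝ) (hv.integrable_indicator measurableSet_Ioc)).integrableOn.congr_fun
    (fun _ hx => convolution_indicator_eq_conv u v hx.1.le hx.2) measurableSet_Ioc

lemma intervalIntegrable_conv_integrand {T C : ℝ} {u v : ℝ → ℝ} (hu : IntegrableOn u (Ioc 0 T))
    (hv : IntegrableOn v (Ioc 0 T)) (hC : ∀ s ∈ Ioc 0 T, |v s| ≤ C) {x : ℝ} (hx0 : 0 ≤ x)
    (hxT : x ≤ T) : IntervalIntegrable (fun s => u s * v (x - s)) volume 0 x := by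
  rw [intervalIntegrable_iff_integrableOn_Ioo_of_le hx0]
  have hm : AEStronglyMeasurable (fun s => (Ioc 0 T).indicator v (x - s)) volume :=
    (hv.integrable_indicator measurableSet_Ioc).aestronglyMeasurable.comp_quasiMeasurePreserving
      (quasiMeasurePreserving_sub_left_of_right_invariant volume x)
  have h1 : Integrable (fun s => (Ioc 0 T).indicator u s * (Ioc 0 T).indicator v (x - s)) :=
    (hu.integrable_indicator measurableSet_Ioc).mul_bdd (c := |C|) hm
      (Filter.Eventually.of_forall fun s => by
        by_cases h : x - s ∈ Ioc 0 T
        · rw [indicator_of_mem h]; exact (hC _ h).trans (le_abs_self C)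
        · rw [indicator_of_notMem h]; simp)
  refine h1.integrableOn.congr_fun (fun s hs => ?_) measurableSet_Ioo
  beta_reduce
  have hs' : x - s ∈ Ioo 0 x := ⟨sub_pos.2 hs.2, by linarith [hs.1]⟩
  rw [indicator_Ioc_of_mem_Ioo u hs hxT, indicator_Ioc_of_mem_Ioo v hs' hxT]

lemma abs_conv_le {T C : ℝ} {u v : ℝ → ℝ} (hu : IntegrableOn u (Ioc 0 T))
    (hC : ∀ s ∈ Ioc 0 T, |v s| ≤ C) {x : ℝ} (hx : x ∈ Ioc 0 T) :
    |conv u v x| ≤ (∫ s in Ioc 0 T, |u s|) * C := by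
  have hC0 : 0 ≤ C := (abs_nonneg _).trans (hC x hx)
  rw [conv, intervalIntegral.integral_of_le hx.1.le, integral_Ioc_eq_integral_Ioo]
  have hsub : Ioo 0 x ⊆ Ioc 0 T := fun s hs => ⟨hs.1, hs.2.le.trans hx.2⟩
  have hi : IntegrableOn (fun s => |u s| * C) (Ioc 0 T) := hu.norm.mul_const C
  calc |∫ s in Ioo 0 x, u s * v (x - s)| ≤ ∫ s in Ioo 0 x, |u s| * C := by
        rw [← Real.norm_eq_abs]
        refine norm_integral_le_of_norm_le (hi.mono_set hsub) ?_
        refine (ae_restrict_mem measurableSet_Ioo).mono fun s hs => ?_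
        rw [norm_mul]
        exact mul_le_mul_of_nonneg_left
          (hC _ ⟨sub_pos.2 hs.2, by linarith [hs.1, hx.2]⟩) (norm_nonneg _)
    _ ≤ ∫ s in Ioc 0 T, |u s| * C :=
        setIntegral_mono_set hi (Filter.Eventually.of_forall fun s => by
          simp only [Pi.zero_apply]; positivity)
          (Filter.Eventually.of_forall hsub)
    _ = _ := integral_mul_const _ _

/-- Pointwise associativity on `[0, T]`; boundedness of `w` makes the iterated integral absolutely
convergent at every point. -/
lemma conv_assoc {T C : ℝ} {u v w : ℝ → ℝ} (hu : IntegrableOn u (Ioc 0 T))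
    (hv : IntegrableOn v (Ioc 0 T)) (hw : IntegrableOn w (Ioc 0 T))
    (hC : ∀ s ∈ Ioc 0 T, |w s| ≤ C) {x : ℝ} (hx0 : 0 ≤ x) (hxT : x ≤ T) :
    conv (conv u v) w x = conv u (conv v w) x := by
  set U := (Ioc 0 T).indicator u with hU
  set V := (Ioc 0 T).indicator v with hV
  set W := (Ioc 0 T).indicator w with hW
  have iU : Integrable U := hu.integrable_indicator measurableSet_Ioc
  have iV : Integrable V := hv.integrable_indicator measurableSet_Ioc
  have iW : Integrable W := hw.integrable_indicator measurableSet_Ioc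
  have bW : ∀ s, ‖W s‖ ≤ |C| := fun s => by
    by_cases h : s ∈ Ioc 0 T
    · rw [hW, indicator_of_mem h]; exact (hC _ h).trans (le_abs_self C)
    · rw [hW, indicator_of_notMem h]; simp
  have bVW : ∀ s, ‖((fun x => ‖V x‖) ⋆[ContinuousLinearMap.mul ℝ ℝ] fun x => ‖W x‖) s‖ ≤
      ∫ r, ‖V r‖ * |C| := fun s => by
    rw [convolution_def]
    refine norm_integral_le_of_norm_le (iV.norm.mul_const _) (Filter.Eventually.of_forall fun r => ?_)
    rw [ContinuousLinearMap.mul_apply', norm_mul, norm_norm, norm_norm]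
    exact mul_le_mul_of_nonneg_left (bW _) (norm_nonneg _)
  have h := convolution_assoc (L := ContinuousLinearMap.mul ℝ ℝ) (L₂ := ContinuousLinearMap.mul ℝ ℝ)
    (L₃ := ContinuousLinearMap.mul ℝ ℝ) (L₄ := ContinuousLinearMap.mul ℝ ℝ)
    (f := U) (g := V) (k := W) (μ := volume) (ν := volume)
    (fun a b c => mul_assoc a b c) (x₀ := x) iU.aestronglyMeasurable
    iV.aestronglyMeasurable iW.aestronglyMeasurable
    (iU.ae_convolution_exists _ iV) (iV.norm.ae_convolution_exists _ iW.norm)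
    (iU.norm.mul_bdd
      (((iV.norm.integrable_convolution (ContinuousLinearMap.mul ℝ ℝ)
        iW.norm).aestronglyMeasurable).comp_quasiMeasurePreserving
        (quasiMeasurePreserving_sub_left_of_right_invariant volume x))
      (Filter.Eventually.of_forall fun s => bVW (x - s)))
  have zU := indicator_Ioc_of_nonpos T u
  have zV := indicator_Ioc_of_nonpos T v
  have zW := indicator_Ioc_of_nonpos T w
  rw [convolution_eq_conv (fun s hs => convolution_eq_zero zU zV hs) zW hx0,
    convolution_eq_conv zU (fun s hs => convolution_eq_zero zV zW hs) hx0] at h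
  rw [conv_congr hx0 (u' := U ⋆[ContinuousLinearMap.mul ℝ ℝ] V) (v' := W), h]
  · exact conv_congr hx0 (fun s hs => indicator_Ioc_of_mem_Ioo _ hs hxT)
      (fun s hs => convolution_indicator_eq_conv v w hs.1.le (hs.2.le.trans hxT))
  · exact fun s hs => (convolution_indicator_eq_conv u v hs.1.le (hs.2.le.trans hxT)).symm
  · exact fun s hs => (indicator_Ioc_of_mem_Ioo _ hs hxT).symm

/-! ### The fractional derivative of the convolution -/

lemma integral_derivWithin {T : ℝ} (f : ℝ → ℝ) (hf : ContDiffOn ℝ 1 f (Icc 0 T)) {s : ℝ}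
    (hs : s ∈ Icc 0 T) (hT : 0 < T) :
    ∫ r in (0:ℝ)..s, derivWithin f (Icc 0 T) r = f s - f 0 := by
  have hg : ContinuousOn (derivWithin f (Icc 0 T)) (Icc 0 T) :=
    hf.continuousOn_derivWithin (uniqueDiffOn_Icc hT) le_rfl
  have hsub : Icc 0 s ⊆ Icc 0 T := Icc_subset_Icc_right hs.2
  refine intervalIntegral.integral_eq_sub_of_hasDerivAt_of_le hs.1 (hf.continuousOn.mono hsub)
    (fun r hr => ?_) ?_
  · have hr' : r ∈ Icc 0 T := hsub ⟨hr.1.le, hr.2.le⟩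
    exact ((hf.differentiableOn one_ne_zero r hr').hasDerivWithinAt).hasDerivAt
      (Icc_mem_nhds hr.1 (hr.2.trans_le hs.2))
  · exact (hg.mono (by rw [uIcc_of_le hs.1]; exact hsub)).intervalIntegrable

/-- For `0 < α < 1`, `ρ ∈ ℝ`, `T > 0` and `f` continuously
differentiable on `[0,T]`, set `Φ(t) = ∫_0^t (t−θ)^{α−1} E_{α,α}(ρ (t−θ)^α) f(θ) dθ`.
Then for every `t ∈ (0,T]`, `({}_0D_t^α Φ)(t) = ρ Φ(t) + f(t)`. -/
theorem caputo_convolution {α ρ T : ℝ} (hα0 : 0 < α) (hα1 : α < 1) (hT : 0 < T)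
    (f : ℝ → ℝ) (hf : ContDiffOn ℝ 1 f (Set.Icc 0 T)) :
    ∀ t ∈ Set.Ioc (0 : ℝ) T,
      (1 / Real.Gamma (1 - α)) *
          ∫ s in (0 : ℝ)..t, (t - s) ^ (-α) *
            deriv (fun r : ℝ =>
              ∫ θ in (0 : ℝ)..r, (r - θ) ^ (α - 1) * mlf α α (ρ * (r - θ) ^ α) * f θ) s =
        ρ * (∫ θ in (0 : ℝ)..t, (t - θ) ^ (α - 1) * mlf α α (ρ * (t - θ) ^ α) * f θ) +
          f t := by
  intro t ht
  set K : ℝ → ℝ := fun s => s ^ (α - 1) * mlf α α (ρ * s ^ α) with hK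
  set A : ℝ → ℝ := fun s => s ^ (-α) with hA
  set E : ℝ → ℝ := fun _ => 1 with hE
  set g : ℝ → ℝ := derivWithin f (Icc 0 T) with hg
  set Φ : ℝ → ℝ := fun r =>
    ∫ θ in (0 : ℝ)..r, (r - θ) ^ (α - 1) * mlf α α (ρ * (r - θ) ^ α) * f θ with hΦ
  have hβ : 0 < 1 - α := sub_pos.2 hα1
  have hΓ : 0 < Real.Gamma (1 - α) := Real.Gamma_pos_of_pos hβ
  have hgc : ContinuousOn g (Icc 0 T) :=
    hf.continuousOn_derivWithin (uniqueDiffOn_Icc hT) le_rfl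
  have subI : Ioc 0 T ⊆ Icc 0 T := Ioc_subset_Icc_self
  have iK : IntegrableOn K (Ioc 0 T) := by
    have := (intervalIntegrable_kernel ρ hα0 one_pos hT).1
    simpa [hK] using this
  have iA : IntegrableOn A (Ioc 0 T) :=
    (intervalIntegral.intervalIntegrable_rpow' (a := 0) (b := T) (by linarith : -1 < -α)).1
  have iE : IntegrableOn E (Ioc 0 T) := integrableOn_const (by simp)
  have ig : IntegrableOn g (Ioc 0 T) :=
    (hgc.integrableOn_compact isCompact_Icc).mono_set subI
  have bE : ∀ s ∈ Ioc 0 T, |E s| ≤ 1 := fun s _ => by simp [hE]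
  obtain ⟨C, hC⟩ := isCompact_Icc.exists_bound_of_continuousOn hgc
  have bg : ∀ s ∈ Ioc 0 T, |g s| ≤ C := fun s hs => hC s (subI hs)
  have conv_E : ∀ (u : ℝ → ℝ) x, conv u E x = ∫ s in (0:ℝ)..x, u s := fun u x => by
    simp [conv, hE]
  have hgE : ∀ s ∈ Icc 0 T, conv g E s = f s - f 0 := fun s hs => by
    rw [conv_E]; exact integral_derivWithin f hf hs hT
  have bf : ∀ s ∈ Ioc 0 T, |conv g E s| ≤ (∫ s in Ioc 0 T, |g s|) * 1 :=
    fun s hs => abs_conv_le ig bE hs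
  -- `f` is replaced by `f 0 + g * 1`, which involves the bounded function `g` only.
  have hΦK : ∀ r ∈ Icc 0 T, Φ r = conv K (conv g E) r + f 0 * conv K E r := fun r hr => by
    have h1 : Φ r = conv K f r := by
      rw [conv_comm, conv, hΦ]
      exact intervalIntegral.integral_congr fun s _ => mul_comm _ _
    have h2 : conv K f r = conv K (fun s => conv g E s + f 0) r :=
      conv_congr hr.1 (fun _ _ => rfl) fun s hs => by
        rw [hgE s ⟨hs.1.le, hs.2.le.trans hr.2⟩]; ring
    rw [h1, h2]
    simp only [conv_E K]
    rw [conv, conv, ← intervalIntegral.integral_const_mul, ← intervalIntegral.integral_add]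
    · exact intervalIntegral.integral_congr fun s _ => by ring
    · exact intervalIntegrable_conv_integrand iK (integrableOn_conv ig iE) bf hr.1 hr.2
    · refine IntervalIntegrable.const_mul ?_ _
      rw [intervalIntegrable_iff_integrableOn_Ioc_of_le hr.1]
      exact iK.mono_set (Ioc_subset_Ioc_right hr.2)
  set h : ℝ → ℝ := fun s => conv K g s + f 0 * K s with hh
  have iKg : IntegrableOn (conv K g) (Ioc 0 T) := integrableOn_conv iK ig
  have ih : IntervalIntegrable h volume 0 T := by
    rw [intervalIntegrable_iff_integrableOn_Ioc_of_le hT.le]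
    exact iKg.add (iK.const_mul _)
  have toInt : ∀ {u : ℝ → ℝ} {r}, IntegrableOn u (Ioc 0 T) → r ∈ Icc 0 T →
      IntervalIntegrable u volume 0 r := fun {u r} hu hr => by
    rw [intervalIntegrable_iff_integrableOn_Ioc_of_le hr.1]
    exact hu.mono_set (Ioc_subset_Ioc_right hr.2)
  have hΦh : ∀ r ∈ Icc 0 T, Φ r = ∫ s in (0:ℝ)..r, h s := fun r hr => by
    rw [hΦK r hr, ← conv_assoc iK ig iE bE hr.1 hr.2, conv_E, conv_E,
      intervalIntegral.integral_add (toInt iKg hr) ((toInt iK hr).const_mul _),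
      intervalIntegral.integral_const_mul]
  -- Near an interior point `Φ` is the primitive of `h`. The endpoint `T`, where nothing is known
  -- about `f` to the right, is a null set.
  have hderiv : ∀ᵐ s, s ∈ Ioo 0 T → deriv Φ s = h s := by
    filter_upwards [ih.ae_hasDerivAt_integral] with s hs hs'
    rw [uIcc_of_le hT.le] at hs
    have hd := hs ⟨hs'.1.le, hs'.2.le⟩ 0 ⟨le_rfl, hT.le⟩
    refine (hd.congr_of_eventuallyEq ?_).deriv
    filter_upwards [Ioo_mem_nhds hs'.1 hs'.2] with r hr
    exact hΦh r ⟨hr.1.le, hr.2.le⟩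
  have htI : t ∈ Icc 0 T := subI ht
  have hint : ∫ s in (0 : ℝ)..t, (t - s) ^ (-α) * deriv Φ s = conv h A t := by
    rw [conv, intervalIntegral.integral_of_le ht.1.le, intervalIntegral.integral_of_le ht.1.le,
      integral_Ioc_eq_integral_Ioo, integral_Ioc_eq_integral_Ioo]
    refine setIntegral_congr_ae measurableSet_Ioo ?_
    filter_upwards [hderiv] with s hs hst
    rw [hs ⟨hst.1, hst.2.trans_le ht.2⟩, mul_comm]
  have hKA : ∀ x ∈ Ioc 0 T, conv K A x = Real.Gamma (1 - α) * (1 + ρ * conv K E x) := by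
    intro x hx
    have h1 := integral_kernel ρ hα0 hβ hx.1
    have h2 := integral_kernel ρ hα0 one_pos hx.1
    have e1 : 1 - α - 1 = -α := by ring
    have e2 : α + (1 - α) = 1 := by ring
    simp only [sub_self, Real.rpow_zero, mul_one, Real.Gamma_one, one_mul, add_sub_cancel_right]
      at h2
    rw [e1, e2, sub_self, Real.rpow_zero, mul_one, mlf_one hα0] at h1
    rw [conv_E, hK, h2, conv, hA, h1]
    ring
  have split : conv h A t = conv (conv K g) A t + f 0 * conv K A t := by
    -- `A` is unbounded, so here the bounded factor is `K * g`; hence the reflection of the variable.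
    have i1 : IntervalIntegrable (fun s => conv K g s * A (t - s)) volume 0 t := by
      have := (intervalIntegrable_conv_integrand iA iKg
        (fun s hs => abs_conv_le iK bg hs) ht.1.le ht.2).comp_sub_left t
      simp only [sub_sub_cancel, sub_self, sub_zero] at this
      exact this.symm.congr fun s _ => mul_comm _ _
    have i2 : IntervalIntegrable (fun s => K s * A (t - s)) volume 0 t := by
      have := intervalIntegrable_kernel ρ hα0 hβ ht.1
      rw [show 1 - α - 1 = -α by ring] at this
      exact this
    rw [conv, conv, conv, ← intervalIntegral.integral_const_mul,
      ← intervalIntegral.integral_add i1 (i2.const_mul _)]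
    exact intervalIntegral.integral_congr fun s _ => by simp only [hh]; ring
  have hmain : conv (conv K g) A t =
      Real.Gamma (1 - α) * ((f t - f 0) + ρ * conv K (conv g E) t) := by
    have h1 : conv (conv K g) A t = conv (conv K A) g t := by
      rw [conv_comm, ← conv_assoc iA iK ig bg ht.1.le ht.2]
      exact conv_congr ht.1.le (fun s _ => conv_comm _ _ _) (fun _ _ => rfl)
    have h2 : conv (conv K A) g t =
        conv (fun s => Real.Gamma (1 - α) * (1 + ρ * conv K E s)) g t :=
      conv_congr ht.1.le (fun s hs => hKA s ⟨hs.1, hs.2.le.trans ht.2⟩) (fun _ _ => rfl)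
    have h3 : conv K (conv g E) t = conv (conv K E) g t := by
      rw [conv_assoc iK iE ig bg ht.1.le ht.2]
      exact conv_congr ht.1.le (fun _ _ => rfl) (fun s _ => conv_comm _ _ _)
    have j1 := intervalIntegrable_conv_integrand iE ig bg ht.1.le ht.2
    have j2 := intervalIntegrable_conv_integrand (integrableOn_conv iK iE) ig bg ht.1.le ht.2
    rw [h1, h2, h3, ← hgE t htI, conv_comm g E, conv, conv, conv,
      ← intervalIntegral.integral_const_mul, ← intervalIntegral.integral_add j1 (j2.const_mul _),
      ← intervalIntegral.integral_const_mul]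
    exact intervalIntegral.integral_congr fun s _ => by simp only [hE]; ring
  change 1 / Real.Gamma (1 - α) * (∫ s in (0 : ℝ)..t, (t - s) ^ (-α) * deriv Φ s) = ρ * Φ t + f t
  rw [hint, split, hmain, hKA t ht, hΦK t htI]
  field_simp
  ring
end
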